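/- Let s be a proper scoring rule on 𝒫. Then the following are equivalent: (a) for every quasi-strictly proper scoring rule s' : 𝒞 → [-∞,M]^Ω extending s, and every c ∈ 𝒞 \ 𝒫, there exists p ∈ 𝒫 such that s'(p) = s(p) strictly dominates s'(c); (b) either E_p s(p) = -∞ for some p ∈ 𝒫, or both of the following hold: (i) for every sequence (p_n) in 𝒫 converging to a probability function p (i.e., p_n({ω}) → p({ω}) for every ω ∈ Ω) such that s(p_n) is finite for all n while s(p) is not finite, one has lim_n E_{p_n} s(p_n) = E_p s(p); and (ii) the set F = s[𝒫] ∩ ℝ^Ω of finite scores is dense in ∂⁺ Conv F. -/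

import Mathlib

open Filter Topology

variable {Ω : Type*}

/-- A probability function: nonnegative, finitely additive, total mass one. -/
def IsProbability [Fintype Ω] (p : Set Ω → ℝ) : Prop :=
  (∀ A, 0 ≤ p A) ∧ (∀ A B : Set Ω, Disjoint A B → p (A ∪ B) = p A + p B) ∧ p Set.univ = 1

/-- Expected value `E_p f = Σ_{ω, p({ω}) ≠ 0} p({ω}) f(ω)`.  Since `EReal`
multiplication satisfies `0 * a = a * 0 = 0` even for infinite `a`, the zero terms
contribute nothing and we may sum over all of `Ω`. -/
noncomputable def expScore [Fintype Ω] (p : Set Ω → ℝ) (f : Ω → EReal) : EReal :=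
  ∑ ω, (p {ω} : EReal) * f ω

/-- A score is finite when all of its values are finite. -/
def FiniteScore (f : Ω → EReal) : Prop := ∀ ω, f ω ≠ ⊥ ∧ f ω ≠ ⊤

/-- The set of finite scores `F = s[𝒫] ∩ ℝ^Ω`, viewed as a subset of `ℝ^Ω`. -/
def finScores [Fintype Ω] (s : (Set Ω → ℝ) → Ω → EReal) : Set (Ω → ℝ) :=
  {z | ∃ p, IsProbability p ∧ s p = fun ω => (z ω : EReal)}

/-- The positive-facing boundary `∂⁺ G`: boundary points of `G` at which `G` has a
normal vector with all components positive. -/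
def posFacing [Fintype Ω] (G : Set (Ω → ℝ)) : Set (Ω → ℝ) :=
  {z | z ∈ frontier G ∧ ∃ v : Ω → ℝ, (∀ ω, 0 < v ω) ∧
    ∀ w ∈ G, ∑ ω, v ω * w ω ≤ ∑ ω, v ω * z ω}

/-- `A` is dense in `B`: every open set meeting `B` meets `A`. -/
def DenseIn {X : Type*} [TopologicalSpace X] (A B : Set X) : Prop :=
  ∀ U : Set X, IsOpen U → (U ∩ B).Nonempty → (U ∩ A).Nonempty

/-! A rule may be extended to the non-probabilities by any score `f` that each probability function
`p` expects to do strictly worse than `s p`, so (a) says that every such `f` is strictly dominated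
by a score in the range of `s`. If no `s p` has expectation `-∞` by `p`, condition (i) says that
`p ↦ E_p s(p)` is the support function of the set `F` of finite scores: since scores are bounded
above, `E_{p_n} s(p_n)` is eventually not much more than `E_p s(p_n)` when `p_n → p`.

Given (i), a hyperplane separating `{x | f < x}` from the convex hull of `F` would yield a
probability function contradicting the inferiority of `f`, so `f` lies strictly below a point of the
hull. Maximising `∏ (y ω - g ω)`, where `f < g` lies below that point, moves it to the
positive-facing boundary, and density moves it to `F`. Conversely, `s p` and the positive-facing
boundary points become inferior once lowered by a constant `δ > 0`, and the finite scores that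
dominate them for small `δ` give (i) and (ii).
-/

section Convexity

lemma le_of_mem_closure_convexHull {F : Set (Ω → ℝ)} {b : Ω → ℝ} (h : b ∈ upperBounds F)
    {z : Ω → ℝ} (hz : z ∈ closure (convexHull ℝ F)) : z ≤ b :=
  closure_minimal (convexHull_min h (convex_Iic b)) isClosed_Iic hz

variable [Fintype Ω]

lemma dotProduct_le_of_mem_closure_convexHull {F : Set (Ω → ℝ)} {v : Ω → ℝ} {r : ℝ}
    (h : ∀ w ∈ F, v ⬝ᵥ w ≤ r) {z : Ω → ℝ} (hz : z ∈ closure (convexHull ℝ F)) : v ⬝ᵥ z ≤ r := by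
  have hconv : Convex ℝ {w : Ω → ℝ | v ⬝ᵥ w ≤ r} :=
    convex_halfSpace_le ⟨dotProduct_add v, fun c w => dotProduct_smul c v w⟩ r
  have hclosed : IsClosed {w : Ω → ℝ | v ⬝ᵥ w ≤ r} :=
    isClosed_le (continuous_const.dotProduct continuous_id) continuous_const
  exact closure_minimal (convexHull_min h hconv) hclosed hz

lemma mem_posFacing_of_mem_closure [Nonempty Ω] {G : Set (Ω → ℝ)} {v z : Ω → ℝ}
    (hz : z ∈ closure G) (hv : ∀ ω, 0 < v ω) (hmax : ∀ w ∈ G, v ⬝ᵥ w ≤ v ⬝ᵥ z) :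
    z ∈ posFacing G := by
  refine ⟨⟨hz, fun hint => ?_⟩, v, hv, hmax⟩
  have hcont : ContinuousAt (fun t : ℝ => z + t • (1 : Ω → ℝ)) 0 := by fun_prop
  have hnear : ∀ᶠ t in 𝓝[>] (0 : ℝ), z + t • (1 : Ω → ℝ) ∈ G :=
    nhdsWithin_le_nhds (hcont.eventually_mem (by simpa using mem_interior_iff_mem_nhds.1 hint))
  obtain ⟨t, htG, ht⟩ := (hnear.and self_mem_nhdsWithin).exists
  have hsum : 0 < v ⬝ᵥ (1 : Ω → ℝ) := by
    simpa [dotProduct] using Finset.sum_pos (fun ω _ => hv ω) Finset.univ_nonempty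
  have hle := hmax _ htG
  rw [dotProduct_add, dotProduct_smul, smul_eq_mul] at hle
  linarith [mul_pos (Set.mem_Ioi.1 ht) hsum]

lemma exists_isMaxOn_prod_sub {K : Set (Ω → ℝ)} (hK : IsClosed K) (hbdd : BddAbove K)
    {g z : Ω → ℝ} (hz : z ∈ K) (hgz : ∀ ω, g ω < z ω) :
    ∃ w ∈ K, (∀ ω, g ω < w ω) ∧ IsMaxOn (fun y : Ω → ℝ => ∏ ω, (y ω - g ω)) (K ∩ Set.Ici g) w := by
  obtain ⟨b, hb⟩ := hbdd
  have hcompact : IsCompact (K ∩ Set.Ici g) :=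
    isCompact_Icc.of_isClosed_subset (hK.inter isClosed_Ici) fun y hy => ⟨hy.2, hb hy.1⟩
  have hzg : z ∈ K ∩ Set.Ici g := ⟨hz, fun ω => (hgz ω).le⟩
  obtain ⟨w, ⟨hwK, hgw⟩, hmax⟩ := hcompact.exists_isMaxOn ⟨z, hzg⟩
    (f := fun y : Ω → ℝ => ∏ ω, (y ω - g ω)) (by fun_prop)
  refine ⟨w, hwK, fun ω => (hgw ω).lt_of_ne fun h => ?_, hmax⟩
  have hpos : 0 < ∏ ω, (z ω - g ω) := Finset.prod_pos fun ω _ => sub_pos.2 (hgz ω)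
  have hzero : ∏ ω, (w ω - g ω) = 0 :=
    Finset.prod_eq_zero (Finset.mem_univ ω) (sub_eq_zero.2 h.symm)
  exact (hpos.trans_le (hmax hzg)).ne' hzero

open Classical in
lemma dotProduct_le_of_isMaxOn_prod_sub {K : Set (Ω → ℝ)} (hK : Convex ℝ K)
    {g w : Ω → ℝ} (hw : w ∈ K) (hgw : ∀ ω, g ω < w ω)
    (hmax : IsMaxOn (fun y : Ω → ℝ => ∏ ω, (y ω - g ω)) (K ∩ Set.Ici g) w)
    {y : Ω → ℝ} (hy : y ∈ K) :
    (fun ω => ∏ j ∈ Finset.univ.erase ω, (w j - g j)) ⬝ᵥ y ≤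
      (fun ω => ∏ j ∈ Finset.univ.erase ω, (w j - g j)) ⬝ᵥ w := by
  have hIci : Set.Ici g ∈ 𝓝 w := by
    rw [← Set.pi_univ_Ici]
    exact set_pi_mem_nhds Set.finite_univ fun ω _ => Ici_mem_nhds (hgw ω)
  have hlocal : IsLocalMaxOn (fun y : Ω → ℝ => ∏ ω, (y ω - g ω)) K w := by
    have := hmax.localize
    rwa [IsLocalMaxOn, nhdsWithin_inter_of_mem' (nhdsWithin_le_nhds hIci)] at this
  have hderiv : HasFDerivAt (fun y : Ω → ℝ => ∏ ω, (y ω - g ω))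
      (∑ ω, (∏ j ∈ Finset.univ.erase ω, (w j - g j)) •
        (ContinuousLinearMap.proj ω : (Ω → ℝ) →L[ℝ] ℝ)) w :=
    HasFDerivAt.finsetProd fun ω _ => (hasFDerivAt_apply ω w).sub_const (g ω)
  have hle := hlocal.hasFDerivWithinAt_nonpos hderiv.hasFDerivWithinAt
    (sub_mem_posTangentConeAt_of_segment_subset (hK.segment_subset hw hy))
  rw [← sub_nonpos, ← dotProduct_sub]
  simpa [dotProduct] using hle

-- Nash bargaining: the maximiser of `∏ (y ω - g ω)` has the positive gradient as normal vector.
lemma exists_mem_posFacing_gt [Nonempty Ω] {G : Set (Ω → ℝ)} (hG : Convex ℝ G)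
    (hbdd : BddAbove G) {g z : Ω → ℝ} (hz : z ∈ G) (hgz : ∀ ω, g ω < z ω) :
    ∃ w ∈ posFacing G, ∀ ω, g ω < w ω := by
  classical
  obtain ⟨w, hw, hgw, hmax⟩ :=
    exists_isMaxOn_prod_sub isClosed_closure hbdd.closure (subset_closure hz) hgz
  refine ⟨w, mem_posFacing_of_mem_closure hw (fun ω => Finset.prod_pos fun j _ => ?_) fun y hy =>
    dotProduct_le_of_isMaxOn_prod_sub hG.closure hw hgw hmax (subset_closure hy), hgw⟩
  exact sub_pos.2 (hgw j)

lemma nonneg_of_isUpperSet_of_lt_dotProduct {A : Set (Ω → ℝ)} {v : Ω → ℝ} {r : ℝ}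
    (hA : IsUpperSet A) (hne : A.Nonempty) (h : ∀ x ∈ A, r < v ⬝ᵥ x) : 0 ≤ v := by
  classical
  obtain ⟨a, ha⟩ := hne
  intro ω
  by_contra! hneg
  rw [Pi.zero_apply] at hneg
  have ht : 0 ≤ (v ⬝ᵥ a - r) / -v ω :=
    div_nonneg (sub_nonneg.2 (h a ha).le) (neg_nonneg.2 hneg.le)
  have hmem : a + ((v ⬝ᵥ a - r) / -v ω) • Pi.single ω 1 ∈ A :=
    hA (le_add_of_nonneg_right (smul_nonneg ht (Pi.single_nonneg.2 zero_le_one))) ha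
  have := h _ hmem
  rw [dotProduct_add, dotProduct_smul, dotProduct_single_one, smul_eq_mul, div_neg, neg_mul,
    div_mul_cancel₀ _ hneg.ne] at this
  linarith

lemma exists_mem_stdSimplex_dotProduct_lt {A C : Set (Ω → ℝ)} (hA : Convex ℝ A)
    (hAo : IsOpen A) (hAu : IsUpperSet A) (hAne : A.Nonempty) (hC : Convex ℝ C)
    (hCne : C.Nonempty) (hAC : Disjoint A C) :
    ∃ v ∈ stdSimplex ℝ Ω, ∀ x ∈ A, ∀ y ∈ C, v ⬝ᵥ y < v ⬝ᵥ x := by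
  classical
  obtain ⟨φ, u, hφA, hφC⟩ := geometric_hahn_banach_open hA hAo hC hAC
  set v : Ω → ℝ := fun ω => -φ (Pi.single ω 1) with hv
  have hφ (x : Ω → ℝ) : v ⬝ᵥ x = -φ x := by
    conv_rhs => rw [pi_eq_sum_univ' x]
    simp [dotProduct, hv, mul_comm]
  have hlt : ∀ x ∈ A, ∀ y ∈ C, v ⬝ᵥ y < v ⬝ᵥ x := fun x hx y hy => by
    rw [hφ, hφ]
    exact neg_lt_neg ((hφA x hx).trans_le (hφC y hy))
  obtain ⟨a, ha⟩ := hAne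
  obtain ⟨c, hc⟩ := hCne
  have hv_nonneg : 0 ≤ v :=
    nonneg_of_isUpperSet_of_lt_dotProduct hAu ⟨a, ha⟩ fun x hx => hlt x hx c hc
  have hv_pos : 0 < ∑ ω, v ω := by
    refine (Finset.sum_nonneg fun ω _ => hv_nonneg ω).lt_of_ne' fun h0 => ?_
    have hv0 : v = 0 := funext fun ω =>
      (Finset.sum_eq_zero_iff_of_nonneg fun ω _ => hv_nonneg ω).1 h0 ω (Finset.mem_univ ω)
    simpa [hv0] using hlt a ha c hc
  refine ⟨(∑ ω, v ω)⁻¹ • v, ⟨fun ω => ?_, ?_⟩, fun x hx y hy => ?_⟩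
  · exact mul_nonneg (inv_nonneg.2 hv_pos.le) (hv_nonneg ω)
  · simp only [Pi.smul_apply, smul_eq_mul, ← Finset.mul_sum, inv_mul_cancel₀ hv_pos.ne']
  · simp only [smul_dotProduct, smul_eq_mul]
    exact mul_lt_mul_of_pos_left (hlt x hx y hy) (inv_pos.2 hv_pos)

lemma dotProduct_le_of_smul_le {μ ν w : Ω → ℝ} {t M : ℝ} (hμ : ∑ ω, μ ω = 1)
    (hν : ∑ ω, ν ω = 1) (hw : ∀ ω, w ω ≤ M) (hle : (1 - t) • μ ≤ ν) :
    ν ⬝ᵥ w ≤ (1 - t) * (μ ⬝ᵥ w) + t * M := by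
  have h : (ν - (1 - t) • μ) ⬝ᵥ w ≤ (ν - (1 - t) • μ) ⬝ᵥ fun _ => M :=
    dotProduct_le_dotProduct_of_nonneg_left hw (sub_nonneg.2 hle)
  have hconst : (ν - (1 - t) • μ) ⬝ᵥ (fun _ => M) = t * M := by
    simp only [dotProduct, Pi.sub_apply, Pi.smul_apply, smul_eq_mul, ← Finset.sum_mul,
      Finset.sum_sub_distrib, ← Finset.mul_sum, hμ, hν]
    ring
  rw [hconst, sub_dotProduct, smul_dotProduct, smul_eq_mul] at h
  linarith

lemma eventually_dotProduct_lt_of_tendsto {ι : Type*} {l : Filter ι} {μ : Ω → ℝ}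
    {ν w : ι → Ω → ℝ} {b M x : ℝ} (hμ : μ ∈ stdSimplex ℝ Ω) (hν : ∀ i, ν i ∈ stdSimplex ℝ Ω)
    (hlim : Tendsto ν l (𝓝 μ)) (hw : ∀ i ω, w i ω ≤ M) (hb : ∀ i, μ ⬝ᵥ w i ≤ b) (hx : b < x) :
    ∀ᶠ i in l, ν i ⬝ᵥ w i < x := by
  have hcont : ContinuousAt (fun t : ℝ => (1 - t) * b + t * M) 0 := by fun_prop
  have hbound : ∀ᶠ t in 𝓝[>] (0 : ℝ), (1 - t) * b + t * M < x :=
    nhdsWithin_le_nhds (hcont.eventually_lt_const (by simpa using hx))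
  obtain ⟨t, htx, ht0, ht1⟩ := (hbound.and (Ioo_mem_nhdsGT zero_lt_one)).exists
  have hev : ∀ᶠ i in l, (1 - t) • μ ≤ ν i := by
    simp only [Pi.le_def, eventually_all]
    intro ω
    rcases (hμ.1 ω).eq_or_lt' with h0 | hpos
    · exact .of_forall fun i => by simpa [h0] using (hν i).1 ω
    · have hlt : (1 - t) * μ ω < μ ω := mul_lt_of_lt_one_left hpos (by linarith)
      exact ((tendsto_pi_nhds.1 hlim ω).eventually_const_lt hlt).mono fun i hi => hi.le
  filter_upwards [hev] with i hi
  calc ν i ⬝ᵥ w i ≤ (1 - t) * (μ ⬝ᵥ w i) + t * M :=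
        dotProduct_le_of_smul_le hμ.2 (hν i).2 (hw i) hi
    _ ≤ (1 - t) * b + t * M := by grw [hb i]
    _ < x := htx

lemma exists_seq_stdSimplex_pos_tendsto [Nonempty Ω] {μ : Ω → ℝ} (hμ : μ ∈ stdSimplex ℝ Ω) :
    ∃ ν : ℕ → Ω → ℝ, (∀ n, ν n ∈ stdSimplex ℝ Ω) ∧ (∀ n ω, 0 < ν n ω) ∧
      Tendsto ν atTop (𝓝 μ) := by
  set u : Ω → ℝ := (stdSimplex.barycenter : stdSimplex ℝ Ω).val
  have hu (ω : Ω) : 0 < u ω := inv_pos.2 (Nat.cast_pos.2 Fintype.card_pos)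
  set t : ℕ → ℝ := fun n => 1 / ((n : ℝ) + 1)
  have ht0 (n : ℕ) : 0 < t n := Nat.one_div_pos_of_nat
  have ht1 (n : ℕ) : t n ≤ 1 := by simpa [t] using Nat.cast_inv_le_one (α := ℝ) (n + 1)
  have hlim : Tendsto (fun n => AffineMap.lineMap μ u (t n)) atTop
      (𝓝 (AffineMap.lineMap μ u (0 : ℝ))) :=
    (AffineMap.lineMap_continuous.tendsto 0).comp tendsto_one_div_add_atTop_nhds_zero_nat
  refine ⟨fun n => AffineMap.lineMap μ u (t n), fun n => ?_, fun n ω => ?_, by simpa using hlim⟩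
  · exact (convex_stdSimplex ℝ Ω).lineMap_mem hμ (Subtype.property _) ⟨(ht0 n).le, ht1 n⟩
  · simp only [AffineMap.lineMap_apply_module]
    exact add_pos_of_nonneg_of_pos (mul_nonneg (sub_nonneg.2 (ht1 n)) (hμ.1 ω))
      (mul_pos (ht0 n) (hu ω))

lemma le_add_of_dotProduct_le {v w z : Ω → ℝ} {ε : ℝ} (hv : ∀ ω, 0 < v ω)
    (hlow : ∀ ω, z ω - ε ≤ w ω) (hle : v ⬝ᵥ w ≤ v ⬝ᵥ z) (ω : Ω) :
    w ω ≤ z ω + ε * ((∑ j, v j) / v ω - 1) := by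
  have hterm : v ω * (w ω - z ω + ε) ≤ ∑ j, v j * (w j - z j + ε) :=
    Finset.single_le_sum (f := fun j => v j * (w j - z j + ε))
      (fun j _ => mul_nonneg (hv j).le (by linarith [hlow j])) (Finset.mem_univ ω)
  have hsum : ∑ j, v j * (w j - z j + ε) = v ⬝ᵥ w - v ⬝ᵥ z + (∑ j, v j) * ε := by
    simp only [dotProduct, mul_add, mul_sub, Finset.sum_add_distrib, Finset.sum_sub_distrib,
      Finset.sum_mul]
  have hdiv : w ω - z ω + ε ≤ (∑ j, v j) * ε / v ω := by
    rw [le_div_iff₀' (hv ω)]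
    linarith
  have : ε * ((∑ j, v j) / v ω - 1) = (∑ j, v j) * ε / v ω - ε := by ring
  linarith

lemma DenseIn.posFacing_of_forall_exists_sub_lt {F G : Set (Ω → ℝ)} (hFG : F ⊆ G)
    (h : ∀ z ∈ posFacing G, ∀ ε > 0, ∃ w ∈ F, ∀ ω, z ω - ε ≤ w ω) : DenseIn F (posFacing G) := by
  rintro U hU ⟨z, hzU, hz⟩
  obtain ⟨-, v, hv, hmax⟩ := id hz
  have hlow : Tendsto (fun (ε : ℝ) ω => z ω - ε) (𝓝[>] 0) (𝓝 z) := by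
    have : ContinuousAt (fun (ε : ℝ) ω => z ω - ε) 0 := by fun_prop
    simpa [ContinuousAt] using this.mono_left nhdsWithin_le_nhds
  have hupp : Tendsto (fun (ε : ℝ) ω => z ω + ε * ((∑ j, v j) / v ω - 1)) (𝓝[>] 0) (𝓝 z) := by
    have : ContinuousAt (fun (ε : ℝ) ω => z ω + ε * ((∑ j, v j) / v ω - 1)) 0 := by fun_prop
    simpa [ContinuousAt] using this.mono_left nhdsWithin_le_nhds
  have hbox := (hlow.Icc hupp).eventually (eventually_smallSets_subset.2 (hU.mem_nhds hzU))
  obtain ⟨ε, hεU, hε⟩ := (hbox.and self_mem_nhdsWithin).exists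
  obtain ⟨w, hwF, hw⟩ := h z hz ε hε
  exact ⟨w, hεU ⟨hw, le_add_of_dotProduct_le hv hw (hmax w (hFG hwF))⟩, hwF⟩

end Convexity
section Expectation

variable {p : Set Ω → ℝ} {f : Ω → EReal}

lemma lt_coe_of_toReal_lt {x : EReal} {r : ℝ} (hx : x ≠ ⊤) (h : x ≠ ⊥ → x.toReal < r) :
    x < r := by
  rcases eq_or_ne x ⊥ with rfl | hb
  · exact EReal.bot_lt_coe r
  · exact (EReal.coe_toReal hx hb).symm.trans_lt (EReal.coe_lt_coe_iff.2 (h hb))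

lemma ne_top_of_forall_le_coe {M : ℝ} (hf : ∀ ω, f ω ≤ (M : EReal)) (ω : Ω) : f ω ≠ ⊤ :=
  ne_top_of_le_ne_top (EReal.coe_ne_top M) (hf ω)

lemma FiniteScore.coe_toReal (hf : FiniteScore f) (ω : Ω) :
    (((EReal.toReal ∘ f) ω : ℝ) : EReal) = f ω :=
  EReal.coe_toReal (hf ω).2 (hf ω).1

variable [Fintype Ω]

/-- The mass function of a credence function, as a vector of `ℝ^Ω`: the expectation of a finite
score is its dot product with this vector. -/
def pointMass (p : Set Ω → ℝ) (ω : Ω) : ℝ := p {ω}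

lemma IsProbability.apply_coe_finset (hp : IsProbability p) (t : Finset Ω) :
    p t = ∑ ω ∈ t, pointMass p ω := by
  classical
  induction t using Finset.induction_on with
  | empty => simpa using hp.2.1 ∅ ∅ (Set.disjoint_empty ∅)
  | insert a t ha ih =>
    rw [Finset.sum_insert ha, ← ih, Finset.coe_insert, Set.insert_eq]
    exact hp.2.1 _ _ (by simpa using ha)

lemma IsProbability.pointMass_mem_stdSimplex (hp : IsProbability p) :
    pointMass p ∈ stdSimplex ℝ Ω :=
  ⟨fun ω => hp.1 {ω}, by simpa [hp.2.2] using (hp.apply_coe_finset Finset.univ).symm⟩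

lemma IsProbability.pointMass_dotProduct_const (hp : IsProbability p) (a : ℝ) :
    (pointMass p ⬝ᵥ fun _ => a) = a := by
  rw [dotProduct, ← Finset.sum_mul, hp.pointMass_mem_stdSimplex.2, one_mul]

lemma exists_isProbability_pointMass_eq {v : Ω → ℝ} (hv : v ∈ stdSimplex ℝ Ω) :
    ∃ p, IsProbability p ∧ pointMass p = v := by
  classical
  refine ⟨fun A => ∑ ω, A.indicator v ω, ⟨fun A => ?_, fun A B hAB => ?_, ?_⟩, ?_⟩
  · exact Finset.sum_nonneg fun ω _ => Set.indicator_nonneg (fun ω _ => hv.1 ω) ω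
  · simp only [Set.indicator_union_of_disjoint hAB, Finset.sum_add_distrib]
  · simpa using hv.2
  · ext ω
    simp [pointMass, Set.indicator_apply]

lemma expScore_coe (p : Set Ω → ℝ) (z : Ω → ℝ) :
    expScore p (fun ω => (z ω : EReal)) = ((pointMass p ⬝ᵥ z : ℝ) : EReal) := by
  simp only [expScore, dotProduct, pointMass, ← EReal.coe_mul]
  exact (map_sum (⟨⟨Real.toEReal, rfl⟩, EReal.coe_add⟩ : ℝ →+ EReal) _ _).symm

lemma expScore_mono (hp : IsProbability p) {g : Ω → EReal} (h : f ≤ g) :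
    expScore p f ≤ expScore p g :=
  Finset.sum_le_sum fun ω _ => mul_le_mul_of_nonneg_left (h ω) (EReal.coe_nonneg.2 (hp.1 {ω}))

lemma expScore_add_coe (hp : IsProbability p) (f : Ω → EReal) (a : ℝ) :
    expScore p (fun ω => f ω + a) = expScore p f + a := by
  have hconst : expScore p (fun _ => (a : EReal)) = a := by
    rw [expScore_coe p fun _ => a, hp.pointMass_dotProduct_const]
  nth_rw 2 [← hconst]
  rw [expScore, expScore, expScore, ← Finset.sum_add_distrib]
  exact Finset.sum_congr rfl fun ω _ => EReal.left_distrib_of_nonneg_of_ne_top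
    (EReal.coe_nonneg.2 (hp.1 {ω})) (EReal.coe_ne_top _) _ _

lemma expScore_eq_bot (hp : IsProbability p) {ω : Ω} (hpω : pointMass p ω ≠ 0) (hf : f ω = ⊥) :
    expScore p f = ⊥ := by
  classical
  rw [expScore, ← Finset.add_sum_erase _ _ (Finset.mem_univ ω), hf,
    EReal.coe_mul_bot_of_pos ((hp.1 {ω}).lt_of_ne' hpω), EReal.bot_add]

lemma expScore_eq_coe_toReal (hf : ∀ ω, f ω ≠ ⊤) (hbot : ∀ ω, pointMass p ω ≠ 0 → f ω ≠ ⊥) :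
    expScore p f = ((pointMass p ⬝ᵥ EReal.toReal ∘ f : ℝ) : EReal) := by
  rw [← expScore_coe]
  refine Finset.sum_congr rfl fun ω _ => ?_
  rcases eq_or_ne (p {ω}) 0 with h0 | h0
  · simp [h0]
  · simp only [Function.comp_apply, EReal.coe_toReal (hf ω) (hbot ω h0)]

lemma expScore_ne_bot_iff (hp : IsProbability p) (hf : ∀ ω, f ω ≠ ⊤) :
    expScore p f ≠ ⊥ ↔ ∀ ω, pointMass p ω ≠ 0 → f ω ≠ ⊥ :=
  ⟨fun h _ hpω hω => h (expScore_eq_bot hp hpω hω),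
    fun h => expScore_eq_coe_toReal hf h ▸ EReal.coe_ne_bot _⟩

lemma exists_coe_gt_dotProduct_eq (hp : IsProbability p) (hf : ∀ ω, f ω ≠ ⊤) {r : ℝ}
    (hr : expScore p f < r) : ∃ x : Ω → ℝ, (∀ ω, f ω < x ω) ∧ pointMass p ⬝ᵥ x = r := by
  classical
  by_cases hbot : ∀ ω, pointMass p ω ≠ 0 → f ω ≠ ⊥
  · rw [expScore_eq_coe_toReal hf hbot, EReal.coe_lt_coe_iff] at hr
    refine ⟨EReal.toReal ∘ f + fun _ => r - pointMass p ⬝ᵥ EReal.toReal ∘ f,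
      fun ω => lt_coe_of_toReal_lt (hf ω) fun _ => lt_add_of_pos_right _ (sub_pos.2 hr), ?_⟩
    rw [dotProduct_add, hp.pointMass_dotProduct_const, add_sub_cancel]
  · push Not at hbot
    obtain ⟨ω₀, hpω₀, hfω₀⟩ := hbot
    set y : Ω → ℝ := EReal.toReal ∘ f + 1
    refine ⟨y + ((r - pointMass p ⬝ᵥ y) / pointMass p ω₀) • Pi.single ω₀ 1,
      fun ω => lt_coe_of_toReal_lt (hf ω) fun hω => ?_, ?_⟩
    · have hne : ω ≠ ω₀ := fun h => hω (h ▸ hfω₀)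
      simp [y, hne]
    · rw [dotProduct_add, dotProduct_smul, dotProduct_single_one, smul_eq_mul,
        div_mul_cancel₀ _ hpω₀, add_sub_cancel]

lemma exists_mem_gt_of_expScore_lt {C : Set (Ω → ℝ)} (hC : Convex ℝ C) (hne : C.Nonempty)
    (hf : ∀ ω, f ω ≠ ⊤)
    (h : ∀ p, IsProbability p → ∃ w ∈ C, expScore p f < (pointMass p ⬝ᵥ w : ℝ)) :
    ∃ z ∈ C, ∀ ω, f ω < z ω := by
  by_contra! hcon
  set A : Set (Ω → ℝ) := Set.univ.pi fun ω => {x | f ω < x}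
  have hslice (ω : Ω) : IsUpperSet {x : ℝ | f ω < x} :=
    fun a b hab ha => lt_of_lt_of_le ha (EReal.coe_le_coe_iff.2 hab)
  have hAconv : Convex ℝ A := convex_pi fun ω _ => (hslice ω).ordConnected.convex
  have hAopen : IsOpen A := isOpen_set_pi Set.finite_univ fun ω _ =>
    isOpen_lt continuous_const continuous_coe_real_ereal
  have hAupper : IsUpperSet A := fun a b hab ha ω _ => hslice ω (hab ω) (ha ω trivial)
  have hAne : A.Nonempty := ⟨EReal.toReal ∘ f + 1, fun ω _ =>
    lt_coe_of_toReal_lt (hf ω) fun _ => lt_add_one (f ω).toReal⟩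
  have hdisj : Disjoint A C := Set.disjoint_left.2 fun x hxA hxC =>
    let ⟨ω, hω⟩ := hcon x hxC
    hω.not_gt (hxA ω trivial)
  obtain ⟨v, hv, hlt⟩ :=
    exists_mem_stdSimplex_dotProduct_lt hAconv hAopen hAupper hAne hC hne hdisj
  obtain ⟨p, hp, rfl⟩ := exists_isProbability_pointMass_eq hv
  obtain ⟨w, hw, hpw⟩ := h p hp
  obtain ⟨x, hx, hxw⟩ := exists_coe_gt_dotProduct_eq hp hf hpw
  exact (hlt x (fun ω _ => hx ω) w hw).ne' hxw

end Expectation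
section ProperRule

variable [Fintype Ω] {M : ℝ} {s : (Set Ω → ℝ) → Ω → EReal} {f : Ω → EReal} {p : Set Ω → ℝ}

/-- A proper scoring rule on the probability functions, with values in `[-∞, M]`; the values of `s`
off the probability functions are irrelevant. -/
structure IsProperRule (M : ℝ) (s : (Set Ω → ℝ) → Ω → EReal) : Prop where
  le_bound : ∀ p, IsProbability p → ∀ ω, s p ω ≤ (M : EReal)
  expScore_le : ∀ p q, IsProbability p → IsProbability q → expScore p (s q) ≤ expScore p (s p)

/-- A quasi-strictly proper scoring rule `s'` on all credence functions, with values in `[-∞, M]`,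
that extends the rule `s` on the probability functions. -/
structure IsQuasiStrictExtension (M : ℝ) (s s' : (Set Ω → ℝ) → Ω → EReal) : Prop where
  le_bound : ∀ c ω, s' c ω ≤ (M : EReal)
  eq_of_isProbability : ∀ p, IsProbability p → s' p = s p
  expScore_le : ∀ p c, IsProbability p → expScore p (s' c) ≤ expScore p (s' p)
  expScore_lt : ∀ p c, IsProbability p → ¬ IsProbability c →
    expScore p (s' c) < expScore p (s' p)

/-- The score `f` is inferior for `s` if every probability function expects it to do strictly worse
than its own score. -/
def IsInferior (s : (Set Ω → ℝ) → Ω → EReal) (f : Ω → EReal) : Prop :=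
  ∀ p, IsProbability p → expScore p f < expScore p (s p)

/-- Every inferior score with values in `[-∞, M]` is strictly dominated by the score of some
probability function. -/
def DominatesInferior (M : ℝ) (s : (Set Ω → ℝ) → Ω → EReal) : Prop :=
  ∀ f : Ω → EReal, (∀ ω, f ω ≤ (M : EReal)) → IsInferior s f →
    ∃ p, IsProbability p ∧ ∀ ω, f ω < s p ω

open Classical in
lemma IsProperRule.isQuasiStrictExtension_ite (hs : IsProperRule M s)
    (hfM : ∀ ω, f ω ≤ (M : EReal)) (hf : IsInferior s f) :
    IsQuasiStrictExtension M s fun c => if IsProbability c then s c else f where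
  le_bound c ω := by split_ifs with hc; exacts [hs.le_bound c hc ω, hfM ω]
  eq_of_isProbability p hp := if_pos hp
  expScore_le p c hp := by
    simp only [if_pos hp]
    split_ifs with hc
    exacts [hs.expScore_le p c hp hc, (hf p hp).le]
  expScore_lt p c hp hc := by simpa only [if_pos hp, if_neg hc] using hf p hp

lemma IsProperRule.forall_extension_dominated_iff (hs : IsProperRule M s) :
    (∀ s', IsQuasiStrictExtension M s s' → ∀ c, ¬ IsProbability c →
      ∃ p, IsProbability p ∧ ∀ ω, s' c ω < s p ω) ↔ DominatesInferior M s := by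
  classical
  refine ⟨fun h f hfM hf => ?_, fun h s' hs' c hc => h (s' c) (hs'.le_bound c) fun p hp => ?_⟩
  · have hzero : ¬ IsProbability (0 : Set Ω → ℝ) := fun h0 => zero_ne_one h0.2.2
    simpa only [if_neg hzero] using h _ (hs.isQuasiStrictExtension_ite hfM hf) 0 hzero
  · exact hs'.eq_of_isProbability p hp ▸ hs'.expScore_lt p c hp hc

/-- A proper scoring rule for which no probability function expects its own score to be `-∞`. -/
structure IsFiniteProperRule (M : ℝ) (s : (Set Ω → ℝ) → Ω → EReal) : Prop
    extends IsProperRule M s where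
  expScore_ne_bot : ∀ p, IsProbability p → expScore p (s p) ≠ ⊥

/-- The entropy of `p`: the expectation by `p` of its own score, as a real number. It is
`expScore p (s p)` only if that expectation is finite, the infinite values of `s p` being replaced
by `0`. -/
noncomputable def entropy (s : (Set Ω → ℝ) → Ω → EReal) (p : Set Ω → ℝ) : ℝ :=
  pointMass p ⬝ᵥ EReal.toReal ∘ s p

lemma FiniteScore.toReal_mem_finScores (hf : FiniteScore (s p)) (hp : IsProbability p) :
    EReal.toReal ∘ s p ∈ finScores s :=
  ⟨p, hp, funext fun ω => (hf.coe_toReal ω).symm⟩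

namespace IsProperRule

lemma ne_top (hs : IsProperRule M s) (hp : IsProbability p) (ω : Ω) : s p ω ≠ ⊤ :=
  ne_top_of_forall_le_coe (hs.le_bound p hp) ω

lemma mem_upperBounds_finScores (hs : IsProperRule M s) :
    (fun _ => M) ∈ upperBounds (finScores s) := by
  rintro w ⟨p, hp, hw⟩ ω
  exact EReal.coe_le_coe_iff.1 (congrFun hw ω ▸ hs.le_bound p hp ω)

lemma bddAbove_convexHull_finScores (hs : IsProperRule M s) :
    BddAbove (convexHull ℝ (finScores s)) :=
  ⟨fun _ => M, convexHull_min hs.mem_upperBounds_finScores (convex_Iic _)⟩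

end IsProperRule

namespace IsFiniteProperRule

lemma expScore_self (hs : IsFiniteProperRule M s) (hp : IsProbability p) :
    expScore p (s p) = entropy s p :=
  expScore_eq_coe_toReal (hs.ne_top hp)
    ((expScore_ne_bot_iff hp (hs.ne_top hp)).1 (hs.expScore_ne_bot p hp))

lemma dotProduct_le_entropy (hs : IsFiniteProperRule M s) (hp : IsProbability p)
    {w : Ω → ℝ} (hw : w ∈ finScores s) : pointMass p ⬝ᵥ w ≤ entropy s p := by
  obtain ⟨q, hq, hqw⟩ := hw
  rw [← EReal.coe_le_coe_iff, ← expScore_coe, ← hqw, ← hs.expScore_self hp]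
  exact hs.expScore_le p q hp hq

lemma finiteScore_of_pos (hs : IsFiniteProperRule M s) (hp : IsProbability p)
    (hpos : ∀ ω, 0 < pointMass p ω) : FiniteScore (s p) := fun ω =>
  ⟨(expScore_ne_bot_iff hp (hs.ne_top hp)).1 (hs.expScore_ne_bot p hp) ω (hpos ω).ne',
    hs.ne_top hp ω⟩

lemma exists_seq_finiteScore_tendsto [Nonempty Ω] (hs : IsFiniteProperRule M s)
    (hp : IsProbability p) :
    ∃ q : ℕ → Set Ω → ℝ, (∀ n, IsProbability (q n)) ∧ (∀ n, FiniteScore (s (q n))) ∧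
      Tendsto (fun n => pointMass (q n)) atTop (𝓝 (pointMass p)) := by
  obtain ⟨ν, hν, hpos, hlim⟩ := exists_seq_stdSimplex_pos_tendsto hp.pointMass_mem_stdSimplex
  choose q hq hqν using fun n => exists_isProbability_pointMass_eq (hν n)
  exact ⟨q, hq, fun n => hs.finiteScore_of_pos (hq n) fun ω => hqν n ▸ hpos n ω,
    by simpa only [hqν] using hlim⟩

lemma finScores_nonempty [Nonempty Ω] (hs : IsFiniteProperRule M s) : (finScores s).Nonempty := by
  obtain ⟨p, hp, -⟩ :=
    exists_isProbability_pointMass_eq (stdSimplex.barycenter : stdSimplex ℝ Ω).property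
  obtain ⟨q, hq, hqfin, -⟩ := hs.exists_seq_finiteScore_tendsto hp
  exact ⟨_, (hqfin 0).toReal_mem_finScores (hq 0)⟩

lemma eventually_entropy_lt (hs : IsFiniteProperRule M s) {ι : Type*} {l : Filter ι}
    {q : ι → Set Ω → ℝ} (hp : IsProbability p) (hq : ∀ i, IsProbability (q i))
    (hfin : ∀ i, FiniteScore (s (q i)))
    (hlim : Tendsto (fun i => pointMass (q i)) l (𝓝 (pointMass p))) {b x : ℝ}
    (hb : b ∈ upperBounds ((pointMass p ⬝ᵥ ·) '' finScores s)) (hx : b < x) :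
    ∀ᶠ i in l, entropy s (q i) < x :=
  have hmem i := (hfin i).toReal_mem_finScores (hq i)
  eventually_dotProduct_lt_of_tendsto hp.pointMass_mem_stdSimplex
    (fun i => (hq i).pointMass_mem_stdSimplex) hlim
    (fun i => hs.mem_upperBounds_finScores (hmem i))
    (fun i => hb (Set.mem_image_of_mem _ (hmem i))) hx

end IsFiniteProperRule

/-- Condition (i): along sequences of probability functions with finite scores, the expected own
score converges to that of any limit whose score is infinite. -/
def EntropyTendsto (s : (Set Ω → ℝ) → Ω → EReal) : Prop :=
  ∀ (pn : ℕ → Set Ω → ℝ) (p : Set Ω → ℝ), (∀ n, IsProbability (pn n)) → IsProbability p →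
    (∀ ω : Ω, Tendsto (fun n => pn n {ω}) atTop (𝓝 (p {ω}))) →
    (∀ n, FiniteScore (s (pn n))) → ¬ FiniteScore (s p) →
    Tendsto (fun n => expScore (pn n) (s (pn n))) atTop (𝓝 (expScore p (s p)))

/-- The entropy of every probability function `p` is the supremum of the expectations by `p` of the
finite scores, i.e. the entropy is the support function of the set of finite scores. -/
def EntropyIsSupport (s : (Set Ω → ℝ) → Ω → EReal) : Prop :=
  ∀ p, IsProbability p → IsLUB ((pointMass p ⬝ᵥ ·) '' finScores s) (entropy s p)

namespace IsFiniteProperRule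

lemma entropy_mem_upperBounds (hs : IsFiniteProperRule M s) (hp : IsProbability p) :
    entropy s p ∈ upperBounds ((pointMass p ⬝ᵥ ·) '' finScores s) :=
  Set.forall_mem_image.2 fun _ hw => hs.dotProduct_le_entropy hp hw

lemma tendsto_entropy (hs : IsFiniteProperRule M s) (hsupp : EntropyIsSupport s) {ι : Type*}
    {l : Filter ι} {q : ι → Set Ω → ℝ} (hp : IsProbability p) (hq : ∀ i, IsProbability (q i))
    (hfin : ∀ i, FiniteScore (s (q i)))
    (hlim : Tendsto (fun i => pointMass (q i)) l (𝓝 (pointMass p))) :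
    Tendsto (fun i => entropy s (q i)) l (𝓝 (entropy s p)) := by
  refine tendsto_order.2 ⟨fun x hx => ?_, fun x hx =>
    hs.eventually_entropy_lt hp hq hfin hlim (hs.entropy_mem_upperBounds hp) hx⟩
  obtain ⟨-, ⟨w, hw, rfl⟩, hxw⟩ := (lt_isLUB_iff (hsupp p hp)).1 hx
  have hcont : Continuous fun v : Ω → ℝ => v ⬝ᵥ w := continuous_id.dotProduct continuous_const
  filter_upwards [((hcont.tendsto _).comp hlim).eventually_const_lt hxw] with i hi
  exact hi.trans_le (hs.dotProduct_le_entropy (hq i) hw)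

lemma entropyIsSupport_of_entropyTendsto [Nonempty Ω] (hs : IsFiniteProperRule M s)
    (h : EntropyTendsto s) : EntropyIsSupport s := by
  refine fun p hp => ⟨hs.entropy_mem_upperBounds hp, fun b hb => ?_⟩
  by_cases hfin : FiniteScore (s p)
  · exact hb (Set.mem_image_of_mem _ (hfin.toReal_mem_finScores hp))
  obtain ⟨q, hq, hqfin, hlim⟩ := hs.exists_seq_finiteScore_tendsto hp
  have hent := h q p hq hp (tendsto_pi_nhds.1 hlim) hqfin hfin
  simp only [hs.expScore_self hp, fun n => hs.expScore_self (hq n), EReal.tendsto_coe] at hent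
  refine le_of_forall_gt_imp_ge_of_dense fun x hx => le_of_tendsto hent ?_
  exact (hs.eventually_entropy_lt hp hq hqfin hlim hb hx).mono fun n hn => hn.le

lemma entropyTendsto_iff_entropyIsSupport [Nonempty Ω] (hs : IsFiniteProperRule M s) :
    EntropyTendsto s ↔ EntropyIsSupport s := by
  refine ⟨hs.entropyIsSupport_of_entropyTendsto, fun h q p hq hp hlim hqfin _ => ?_⟩
  simp only [hs.expScore_self hp, fun n => hs.expScore_self (hq n), EReal.tendsto_coe]
  exact hs.tendsto_entropy h hp hq hqfin (tendsto_pi_nhds.2 hlim)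

lemma exists_mem_finScores_sub_lt (hs : IsFiniteProperRule M s) (hdom : DominatesInferior M s)
    (hfM : ∀ ω, f ω ≤ (M : EReal)) (hf : ∀ p, IsProbability p → expScore p f ≤ entropy s p)
    {δ : ℝ} (hδ : 0 < δ) : ∃ w ∈ finScores s, ∀ ω, f ω + (-δ : ℝ) < w ω := by
  have hδ' : ((-δ : ℝ) : EReal) ≤ 0 := EReal.coe_nonpos.2 (neg_nonpos.2 hδ.le)
  obtain ⟨q, hq, hlt⟩ := hdom (fun ω => f ω + (-δ : ℝ))
    (fun ω => (add_le_of_nonpos_right hδ').trans (hfM ω)) fun p hp => by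
      rw [expScore_add_coe hp, hs.expScore_self hp]
      grw [hf p hp]
      exact_mod_cast add_lt_of_neg_right _ (neg_neg_of_pos hδ)
  have hfin : FiniteScore (s q) := fun ω => ⟨(bot_le.trans_lt (hlt ω)).ne', hs.ne_top hq ω⟩
  exact ⟨_, hfin.toReal_mem_finScores hq, fun ω => (hfin.coe_toReal ω).symm ▸ hlt ω⟩

lemma entropyIsSupport_of_dominatesInferior (hs : IsFiniteProperRule M s)
    (hdom : DominatesInferior M s) : EntropyIsSupport s := by
  refine fun p hp => ⟨hs.entropy_mem_upperBounds hp, fun b hb => ?_⟩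
  refine le_of_forall_pos_le_add fun δ hδ => ?_
  obtain ⟨w, hw, hlt⟩ := hs.exists_mem_finScores_sub_lt hdom (hs.le_bound p hp)
    (fun q hq => hs.expScore_self hq ▸ hs.expScore_le q p hq hp) hδ
  have hle : entropy s p + -δ ≤ pointMass p ⬝ᵥ w := by
    rw [← EReal.coe_le_coe_iff, EReal.coe_add, ← hs.expScore_self hp, ← expScore_add_coe hp,
      ← expScore_coe]
    exact expScore_mono hp fun ω => (hlt ω).le
  linarith [hb (Set.mem_image_of_mem _ hw)]

lemma denseIn_of_dominatesInferior (hs : IsFiniteProperRule M s) (hdom : DominatesInferior M s) :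
    DenseIn (finScores s) (posFacing (convexHull ℝ (finScores s))) := by
  refine DenseIn.posFacing_of_forall_exists_sub_lt (subset_convexHull ℝ _) fun z hz δ hδ => ?_
  have hzcl := frontier_subset_closure hz.1
  obtain ⟨w, hw, hlt⟩ := hs.exists_mem_finScores_sub_lt hdom (f := fun ω => (z ω : EReal))
    (fun ω => EReal.coe_le_coe_iff.2
      (le_of_mem_closure_convexHull hs.mem_upperBounds_finScores hzcl ω))
    (fun p hp => by
      rw [expScore_coe, EReal.coe_le_coe_iff]
      exact dotProduct_le_of_mem_closure_convexHull
        (fun w hw => hs.dotProduct_le_entropy hp hw) hzcl) hδ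
  exact ⟨w, hw, fun ω => by exact_mod_cast (hlt ω).le⟩

lemma dominatesInferior_of_denseIn [Nonempty Ω] (hs : IsFiniteProperRule M s)
    (hsupp : EntropyIsSupport s)
    (hdense : DenseIn (finScores s) (posFacing (convexHull ℝ (finScores s)))) :
    DominatesInferior M s := by
  intro f hfM hf
  have hexp : ∀ p, IsProbability p →
      ∃ w ∈ convexHull ℝ (finScores s), expScore p f < (pointMass p ⬝ᵥ w : ℝ) := by
    intro p hp
    obtain ⟨x, hfx, hx⟩ := EReal.lt_iff_exists_real_btwn.1 (hs.expScore_self hp ▸ hf p hp)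
    obtain ⟨-, ⟨w, hw, rfl⟩, hxw⟩ := (lt_isLUB_iff (hsupp p hp)).1 (EReal.coe_lt_coe_iff.1 hx)
    exact ⟨w, subset_convexHull ℝ _ hw, hfx.trans (EReal.coe_lt_coe_iff.2 hxw)⟩
  obtain ⟨z, hz, hfz⟩ := exists_mem_gt_of_expScore_lt (convex_convexHull ℝ _)
    hs.finScores_nonempty.convexHull (ne_top_of_forall_le_coe hfM) hexp
  choose g hfg hgz using fun ω => EReal.lt_iff_exists_real_btwn.1 (hfz ω)
  obtain ⟨y, hy, hgy⟩ := exists_mem_posFacing_gt (convex_convexHull ℝ _)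
    hs.bddAbove_convexHull_finScores hz fun ω => EReal.coe_lt_coe_iff.1 (hgz ω)
  have hopen : IsOpen {x : Ω → ℝ | ∀ ω, g ω < x ω} := by
    simp only [Set.ofPred_forall]
    exact isOpen_iInter_of_finite fun ω => isOpen_lt continuous_const (continuous_apply ω)
  obtain ⟨x, hgx, q, hq, hqx⟩ := hdense _ hopen ⟨y, hgy, hy⟩
  exact ⟨q, hq, fun ω => hqx ▸ (hfg ω).trans (EReal.coe_lt_coe_iff.2 (hgx ω))⟩

lemma dominatesInferior_iff [Nonempty Ω] (hs : IsFiniteProperRule M s) :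
    DominatesInferior M s ↔ EntropyTendsto s ∧
      DenseIn (finScores s) (posFacing (convexHull ℝ (finScores s))) := by
  rw [hs.entropyTendsto_iff_entropyIsSupport]
  exact ⟨fun h => ⟨hs.entropyIsSupport_of_dominatesInferior h, hs.denseIn_of_dominatesInferior h⟩,
    fun h => hs.dominatesInferior_of_denseIn h.1 h.2⟩

end IsFiniteProperRule

end ProperRule

theorem stmt0 [Fintype Ω] [Nonempty Ω] (M : ℝ)
    (s : (Set Ω → ℝ) → Ω → EReal)
    (hbound : ∀ p, IsProbability p → ∀ ω, s p ω ≤ (M : EReal))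
    (hproper : ∀ p q, IsProbability p → IsProbability q →
      expScore p (s q) ≤ expScore p (s p)) :
    -- (a)
    (∀ s' : (Set Ω → ℝ) → Ω → EReal,
        (∀ c ω, s' c ω ≤ (M : EReal)) →
        (∀ p, IsProbability p → s' p = s p) →
        (∀ p c, IsProbability p → expScore p (s' c) ≤ expScore p (s' p)) →
        (∀ p c, IsProbability p → ¬ IsProbability c →
          expScore p (s' c) < expScore p (s' p)) →
        ∀ c, ¬ IsProbability c →
          ∃ p, IsProbability p ∧ ∀ ω, s' c ω < s p ω)
    ↔
    -- (b)
    ((∃ p, IsProbability p ∧ expScore p (s p) = ⊥) ∨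
      ((∀ (pn : ℕ → Set Ω → ℝ) (p : Set Ω → ℝ),
          (∀ n, IsProbability (pn n)) → IsProbability p →
          (∀ ω : Ω, Tendsto (fun n => pn n {ω}) atTop (𝓝 (p {ω}))) →
          (∀ n, FiniteScore (s (pn n))) → ¬ FiniteScore (s p) →
          Tendsto (fun n => expScore (pn n) (s (pn n))) atTop
            (𝓝 (expScore p (s p)))) ∧
        DenseIn (finScores s) (posFacing (convexHull ℝ (finScores s))))) := by
  have hs : IsProperRule M s := ⟨hbound, hproper⟩
  refine Iff.trans (b := DominatesInferior M s)
    ⟨fun h => hs.forall_extension_dominated_iff.1 fun s' hs' => h s' hs'.1 hs'.2 hs'.3 hs'.4,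
      fun h s' hM hext hle hlt =>
        hs.forall_extension_dominated_iff.2 h s' ⟨hM, hext, hle, hlt⟩⟩ ?_
  by_cases hbot : ∃ p, IsProbability p ∧ expScore p (s p) = ⊥
  · obtain ⟨p, hp, hpbot⟩ := id hbot
    exact iff_of_true (fun f _ hf => absurd (hpbot ▸ hf p hp) not_lt_bot) (.inl hbot)
  · rw [or_iff_right hbot]
    have hsfin : IsFiniteProperRule M s := ⟨hs, fun p hp h => hbot ⟨p, hp, h⟩⟩
    exact hsfin.dominatesInferior_iff
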